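/- arXiv:2309.08093 — 2 statements merged into one kernel-verified Lean document; each statement's English description precedes it below -/
import Mathlib

section
/- Let $S_k \in \mathbb{R}^{m \times n_k}$, $k = 1, \ldots, d$, be CountSketch matrices with hash maps $h_k$ and sign vectors $v_k$, and let $S \in \mathbb{R}^{m \times n_1 n_2 \cdots n_d}$ be the TensorSketch matrix generated by $S_1, \ldots, S_d$ (hash map $h(i_1,\ldots,i_d) = ((\sum_{k=1}^d (h_k(i_k)-1)) \bmod m)+1$, sign $v(i_1,\ldots,i_d) = \prod_{k=1}^d v_k(i_k)$). Then $S = F^{-1}\,[(F S_d) \square (F S_{d-1}) \square \cdots \square (F S_1)]$, where $F \in \mathbb{C}^{m \times m}$ is the discrete Fourier transform matrix; equivalently, $(FS)(s, i) = \prod_{k=1}^d (F S_k)(s, i_k)$ for all $s \in [m]$ and all multi-indices $(i_1,\ldots,i_d)$. -/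
open Matrix Complex

noncomputable def dft (m : ℕ) : Matrix (Fin m) (Fin m) ℂ :=
  Matrix.of fun s t : Fin m =>
    Complex.exp (-2 * Real.pi * Complex.I * ((s : ℕ) : ℂ) * ((t : ℕ) : ℂ) / (m : ℂ))

def countSketch {m : ℕ} {ι : Type*} (h : ι → Fin m) (v : ι → ℝ) :
    Matrix (Fin m) ι ℝ :=
  Matrix.of fun j i => if h i = j then v i else 0

def faceSplit {μ n₁ n₂ α : Type*} [Mul α] (D : Matrix μ n₂ α) (C : Matrix μ n₁ α) :
    Matrix μ (n₁ × n₂) α :=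
  Matrix.of fun s i => D s i.2 * C s i.1

def hashPair {m : ℕ} [NeZero m] {ι₁ ι₂ : Type*} (h₁ : ι₁ → Fin m) (h₂ : ι₂ → Fin m) :
    ι₁ × ι₂ → Fin m :=
  fun i => ⟨((h₁ i.1 : ℕ) + (h₂ i.2 : ℕ)) % m, Nat.mod_lt _ (Nat.pos_of_ne_zero (NeZero.ne m))⟩

def hashFam {m : ℕ} [NeZero m] {q : ℕ} {n : Fin q → ℕ} (h : ∀ k, Fin (n k) → Fin m) :
    (∀ k, Fin (n k)) → Fin m :=
  fun i => ⟨(∑ k, (h k (i k) : ℕ)) % m, Nat.mod_lt _ (Nat.pos_of_ne_zero (NeZero.ne m))⟩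

def ttChain (r n : ℕ → ℕ) {α : Type*} [Semiring α]
    (G : (j : ℕ) → Fin (n j) → Matrix (Fin (r j)) (Fin (r (j + 1))) α) :
    (p : ℕ) → ((j : Fin p) → Fin (n j)) → Matrix (Fin (r 0)) (Fin (r p)) α
  | 0, _ => 1
  | p + 1, i => ttChain r n G p (fun j => i j.castSucc) * G p (i (Fin.last p))

/-!
The rows of `F` are characters of `ℤ/m`, so multiplying a CountSketch matrix on the left by `F`
replaces the hash value of each column by a character value: `(F S)(s, i) = w ^ (s · h(i)) · v(i)`.
Since the TensorSketch hash is the sum of the component hashes in `ℤ/m` and its weight is the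
product of the component weights, `F S` factors entrywise. The identity for `S` itself follows
because `F` is the Vandermonde matrix of the distinct powers of the primitive root `w`.
-/

/-- The primitive `m`-th root of unity `w = exp (-2πi / m)` generating the DFT matrix, encoded as the
inverse of the root in `Complex.isPrimitiveRoot_exp`. -/
noncomputable def dftRoot (m : ℕ) : ℂ :=
  (Complex.exp (2 * Real.pi * Complex.I / m))⁻¹

theorem isPrimitiveRoot_dftRoot {m : ℕ} (hm : m ≠ 0) : IsPrimitiveRoot (dftRoot m) m :=
  (Complex.isPrimitiveRoot_exp m hm).inv

theorem dft_apply_eq_pow {m : ℕ} (s t : Fin m) :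
    dft m s t = (dftRoot m ^ (s : ℕ)) ^ (t : ℕ) := by
  rw [dftRoot, ← Complex.exp_neg, ← Complex.exp_nat_mul, ← Complex.exp_nat_mul, dft, of_apply]
  congr 1
  ring

theorem dft_eq_vandermonde (m : ℕ) :
    dft m = vandermonde fun s : Fin m => dftRoot m ^ (s : ℕ) := by
  ext s t
  rw [dft_apply_eq_pow, vandermonde_apply]

theorem isUnit_det_dft (m : ℕ) : IsUnit (dft m).det := by
  rw [dft_eq_vandermonde, isUnit_iff_ne_zero, det_vandermonde_ne_zero_iff]
  exact fun s t hst => Fin.ext ((isPrimitiveRoot_dftRoot s.pos.ne').pow_inj s.2 t.2 hst)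

theorem dft_apply_zero {m : ℕ} [NeZero m] (s : Fin m) : dft m s 0 = 1 := by
  rw [dft_apply_eq_pow, Fin.val_zero, pow_zero]

theorem dft_apply_add {m : ℕ} (s t u : Fin m) : dft m s (t + u) = dft m s t * dft m s u := by
  have hroot : (dftRoot m ^ (s : ℕ)) ^ m = 1 := by
    rw [pow_right_comm, (isPrimitiveRoot_dftRoot s.pos.ne').pow_eq_one, one_pow]
  simp only [dft_apply_eq_pow]
  rw [Fin.val_add, ← pow_eq_pow_mod _ hroot, pow_add]

theorem dft_apply_sum {m : ℕ} [NeZero m] {κ : Type*} (s : Fin m) (K : Finset κ)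
    (t : κ → Fin m) : dft m s (∑ k ∈ K, t k) = ∏ k ∈ K, dft m s (t k) := by
  induction K using Finset.cons_induction with
  | empty => exact dft_apply_zero s
  | cons k K hk ih => rw [Finset.sum_cons, Finset.prod_cons, dft_apply_add, ih]

theorem mul_countSketch_apply {m : ℕ} {μ ι : Type*} (M : Matrix μ (Fin m) ℂ) (h : ι → Fin m)
    (v : ι → ℝ) (s : μ) (i : ι) :
    (M * (countSketch h v).map Complex.ofReal) s i = M s (h i) * v i := by
  simp [mul_apply, countSketch, apply_ite Complex.ofReal]

open scoped Fin.CommRing in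
theorem hashFam_eq_sum {m d : ℕ} [NeZero m] {n : Fin d → ℕ} (h : ∀ k, Fin (n k) → Fin m) :
    hashFam h = fun i => ∑ k, h k (i k) := by
  funext i
  change ((∑ k, (h k (i k) : ℕ) : ℕ) : Fin m) = ∑ k, h k (i k)
  simp only [Nat.cast_sum, Fin.cast_val_eq_self]

theorem dft_mul_countSketch_sum_prod {m : ℕ} [NeZero m] {κ : Type*} [Fintype κ] {ι : κ → Type*}
    (h : ∀ k, ι k → Fin m) (v : ∀ k, ι k → ℝ) (s : Fin m) (i : ∀ k, ι k) :
    (dft m * (countSketch (fun i : ∀ k, ι k => ∑ k, h k (i k))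
        (fun i => ∏ k, v k (i k))).map Complex.ofReal) s i =
      ∏ k, (dft m * (countSketch (h k) (v k)).map Complex.ofReal) s (i k) := by
  simp only [mul_countSketch_apply, dft_apply_sum, Complex.ofReal_prod, Finset.prod_mul_distrib]

theorem tensorSketch_eq_invDFT_faceSplit_chain_general {m : ℕ} [NeZero m] {κ : Type*} [Fintype κ]
    {ι : κ → Type*} (h : ∀ k, ι k → Fin m) (v : ∀ k, ι k → ℝ) (S : Matrix (Fin m) (∀ k, ι k) ℝ)
    (hS : S = countSketch (fun i => ∑ k, h k (i k)) (fun i => ∏ k, v k (i k))) :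
    S.map Complex.ofReal =
      (dft m)⁻¹ *
        Matrix.of (fun (s : Fin m) (i : ∀ k, ι k) =>
          ∏ k, (dft m * (countSketch (h k) (v k)).map Complex.ofReal) s (i k)) ∧
    ∀ (s : Fin m) (i : ∀ k, ι k),
      (dft m * S.map Complex.ofReal) s i =
        ∏ k, (dft m * (countSketch (h k) (v k)).map Complex.ofReal) s (i k) := by
  subst hS
  refine ⟨?_, dft_mul_countSketch_sum_prod h v⟩
  simp only [← dft_mul_countSketch_sum_prod]
  exact (nonsing_inv_mul_cancel_left _ _ (isUnit_det_dft m)).symm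

/-- Corollary 3.2: the TensorSketch matrix generated by `d` CountSketch
matrices satisfies `S = F⁻¹ [(F S_d) □ ⋯ □ (F S₁)]` (the iterated face-splitting product is
the matrix whose `(s,i)` entry is `∏ k, (F S_k)(s, i_k)`), equivalently
`(F S)(s, i) = ∏ k, (F S_k)(s, i_k)`. -/
theorem tensorSketch_eq_invDFT_faceSplit_chain
    {m d : ℕ} [NeZero m] {n : Fin d → ℕ}
    (h : ∀ k, Fin (n k) → Fin m) (v : ∀ k, Fin (n k) → ℝ)
    (hv : ∀ k i, v k i = 1 ∨ v k i = -1)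
    (S : Matrix (Fin m) (∀ k, Fin (n k)) ℝ)
    (hS : S = countSketch (hashFam h) (fun i => ∏ k, v k (i k))) :
    S.map Complex.ofReal =
      (dft m)⁻¹ *
        Matrix.of (fun (s : Fin m) (i : ∀ k, Fin (n k)) =>
          ∏ k, (dft m * (countSketch (h k) (v k)).map Complex.ofReal) s (i k)) ∧
    ∀ (s : Fin m) (i : ∀ k, Fin (n k)),
      (dft m * S.map Complex.ofReal) s i =
        ∏ k, (dft m * (countSketch (h k) (v k)).map Complex.ofReal) s (i k) := by
  rw [hashFam_eq_sum] at hS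
  exact tensorSketch_eq_invDFT_faceSplit_chain_general h v S hS
end

section
/- Let $\mathcal{G}_1 \in \mathbb{R}^{1 \times n_1 \times r_1}, \mathcal{G}_2 \in \mathbb{R}^{r_1 \times n_2 \times r_2}, \ldots, \mathcal{G}_{k-1} \in \mathbb{R}^{r_{k-2} \times n_{k-1} \times r_{k-1}}$ be TT-cores and let $G_{<k} \in \mathbb{R}^{n_1 \cdots n_{k-1} \times r_{k-1}}$ be the matrix whose row indexed by $(i_1, \ldots, i_{k-1})$ equals the product $\mathcal{G}_1(i_1)\mathcal{G}_2(i_2)\cdots\mathcal{G}_{k-1}(i_{k-1})$. Let $S_{<k} \in \mathbb{R}^{m \times n_1\cdots n_{k-1}}$ be the TensorSketch matrix generated by CountSketch matrices $S_1, \ldots, S_{k-1}$ with $S_j \in \mathbb{R}^{m \times n_j}$, and $F \in \mathbb{C}^{m\times m}$ the DFT matrix. Then $F S_{<k} G_{<k} = \left[(\mathcal{G}_1 \times_2 F S_1) \star (\mathcal{G}_2 \times_2 F S_2) \star \cdots \star (\mathcal{G}_{k-1} \times_2 F S_{k-1})\right]^{\mathrm{L}}$, where $[\cdot]^{\mathrm{L}}$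 denotes the left unfolding of a third-order tensor. -/
open Matrix Complex

/-- The complex third-order tensor `𝒢_j ×₂ (F S_j)` (2-mode product of the TT-core `𝒢_j`
with the DFT-transformed CountSketch matrix `F S_j`), presented by its lateral slices:
`(𝒢_j ×₂ F S_j)(s) = ∑ i, (F S_j)(s,i) • 𝒢_j(i)`. -/
noncomputable def modeCore {m : ℕ} (r n : ℕ → ℕ)
    (G : (j : ℕ) → Fin (n j) → Matrix (Fin (r j)) (Fin (r (j + 1))) ℝ)
    (h : (j : ℕ) → Fin (n j) → Fin m) (v : (j : ℕ) → Fin (n j) → ℝ) :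
    (j : ℕ) → Fin m → Matrix (Fin (r j)) (Fin (r (j + 1))) ℂ :=
  fun j s => Matrix.of fun x y =>
    ∑ i, (dft m * (countSketch (h j) (v j)).map Complex.ofReal) s i * ((G j i x y : ℝ) : ℂ)

/-!
The `s`-th row of the DFT matrix is a character of `ℤ/m`. Since the hash of a TensorSketch is a sum
modulo `m` of the individual hashes, each row of `F S_{<k}` factors into the corresponding rows of
the `F S_j`. Multilinearity of the tensor-train product in its cores then moves the factor `F S_j`
into the `j`-th core.
-/

/-- The TensorSketch matrix generated by the CountSketch matrices `countSketch (h k) (v k)`. Its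
columns are indexed by multi-indices instead of by their linearization, and the weights `v k` may be
arbitrary reals. -/
def tensorSketch {m : ℕ} [NeZero m] {q : ℕ} {n : Fin q → ℕ} (h : ∀ k, Fin (n k) → Fin m)
    (v : ∀ k, Fin (n k) → ℝ) : Matrix (Fin m) (∀ k, Fin (n k)) ℝ :=
  countSketch (hashFam h) fun i => ∏ k, v k (i k)

/-- The 2-mode product `𝒢 ×₂ M` of a third-order tensor with a matrix. Both tensors are encoded by
their lateral slices. -/
def modeProduct {ι κ l₁ l₂ R α : Type*} [Fintype ι] [AddCommMonoid α] [SMul R α]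
    (G : ι → Matrix l₁ l₂ α) (M : Matrix κ ι R) : κ → Matrix l₁ l₂ α :=
  fun s => ∑ i, M s i • G i

section TensorTrain

variable {r n : ℕ → ℕ}

theorem ttChain_map {α β : Type*} [Semiring α] [Semiring β] (f : α →+* β)
    (G : (j : ℕ) → Fin (n j) → Matrix (Fin (r j)) (Fin (r (j + 1))) α) (p : ℕ)
    (i : (j : Fin p) → Fin (n j)) :
    (ttChain r n G p i).map f = ttChain r n (fun j k => (G j k).map f) p i := by
  induction p with
  | zero => exact Matrix.map_one f f.map_zero f.map_one
  | succ p ih => rw [ttChain, Matrix.map_mul, ih, ttChain]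

theorem ttChain_modeProduct {R α : Type*} [CommSemiring R] [Semiring α] [Algebra R α] {n' : ℕ → ℕ}
    (G : (j : ℕ) → Fin (n j) → Matrix (Fin (r j)) (Fin (r (j + 1))) α)
    (M : (j : ℕ) → Matrix (Fin (n' j)) (Fin (n j)) R) (p : ℕ) (s : (j : Fin p) → Fin (n' j)) :
    ttChain r n' (fun j => modeProduct (G j) (M j)) p s =
      ∑ i : (j : Fin p) → Fin (n j), (∏ j : Fin p, M j (s j) (i j)) • ttChain r n G p i := by
  induction p with
  | zero => simp [ttChain]
  | succ p ih =>
    rw [← (Fin.snocEquiv fun j : Fin (p + 1) => Fin (n j)).sum_comp, Fintype.sum_prod_type]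
    simp only [ttChain, ih, modeProduct, Matrix.sum_mul, Matrix.mul_sum, Fin.prod_univ_castSucc,
      Fin.snocEquiv_apply, Fin.snoc_castSucc, Fin.snoc_last, Fin.val_castSucc, Fin.val_last]
    refine Finset.sum_congr rfl fun k _ => Finset.sum_congr rfl fun i _ => ?_
    rw [Matrix.smul_mul, Matrix.mul_smul, smul_smul]

end TensorTrain

theorem addChar_map_sum {ι A M : Type*} [AddCommMonoid A] [CommMonoid M] (ψ : AddChar A M)
    (t : Finset ι) (f : ι → A) : ψ (∑ i ∈ t, f i) = ∏ i ∈ t, ψ (f i) :=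
  map_prod ψ.toMonoidHom (fun i => Multiplicative.ofAdd (f i)) t

section Sketch

variable {m : ℕ}

theorem mul_countSketch_map_apply {κ ι R : Type*} [NonAssocSemiring R] (f : ℝ →+* R)
    (A : Matrix κ (Fin m) R) (h : ι → Fin m) (v : ι → ℝ) (s : κ) (i : ι) :
    (A * (countSketch h v).map f) s i = A s (h i) * f (v i) := by
  simp [Matrix.mul_apply, countSketch, apply_ite f]

variable [NeZero m]

theorem dft_apply_eq_stdAddChar (s t : Fin m) :
    dft m s t = ZMod.stdAddChar (-((s : ℕ) * (t : ℕ) : ZMod m)) := by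
  have stdAddChar_eq_exp := ZMod.stdAddChar_coe (N := m) (-((s : ℕ) * (t : ℕ)))
  push_cast at stdAddChar_eq_exp
  rw [stdAddChar_eq_exp, dft, Matrix.of_apply]
  ring_nf

theorem natCast_hashFam {q : ℕ} {n : Fin q → ℕ} (h : ∀ k, Fin (n k) → Fin m)
    (i : ∀ k, Fin (n k)) : ((hashFam h i : ℕ) : ZMod m) = ∑ k, ((h k (i k) : ℕ) : ZMod m) := by
  rw [hashFam, ZMod.natCast_mod, Nat.cast_sum]

theorem dft_hashFam {q : ℕ} {n : Fin q → ℕ} (h : ∀ k, Fin (n k) → Fin m) (s : Fin m)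
    (i : ∀ k, Fin (n k)) : dft m s (hashFam h i) = ∏ k, dft m s (h k (i k)) := by
  simp only [dft_apply_eq_stdAddChar, natCast_hashFam, Finset.mul_sum, ← Finset.sum_neg_distrib,
    addChar_map_sum]

theorem dft_mul_tensorSketch_apply {q : ℕ} {n : Fin q → ℕ} (h : ∀ k, Fin (n k) → Fin m)
    (v : ∀ k, Fin (n k) → ℝ) (s : Fin m) (i : ∀ k, Fin (n k)) :
    (dft m * (tensorSketch h v).map ofRealHom) s i =
      ∏ k, (dft m * (countSketch (h k) (v k)).map ofRealHom) s (i k) := by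
  simp only [tensorSketch, mul_countSketch_map_apply, dft_hashFam, map_prod,
    Finset.prod_mul_distrib]

end Sketch

theorem modeCore_eq_modeProduct {m : ℕ} (r n : ℕ → ℕ)
    (G : (j : ℕ) → Fin (n j) → Matrix (Fin (r j)) (Fin (r (j + 1))) ℝ)
    (h : (j : ℕ) → Fin (n j) → Fin m) (v : (j : ℕ) → Fin (n j) → ℝ) (j : ℕ) :
    modeCore r n G h v j =
      modeProduct (fun i => (G j i).map ofRealHom)
        (dft m * (countSketch (h j) (v j)).map ofRealHom) := by
  ext s x y
  simp only [modeProduct, Matrix.sum_apply]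
  rfl

theorem dft_tensorSketch_interfaceLeft_eq_sliceChain_general
    {m p : ℕ} [NeZero m] (r n : ℕ → ℕ)
    (G : (j : ℕ) → Fin (n j) → Matrix (Fin (r j)) (Fin (r (j + 1))) ℝ)
    (h : (j : ℕ) → Fin (n j) → Fin m) (v : (j : ℕ) → Fin (n j) → ℝ) (a : Fin (r 0))
    (Glt : Matrix ((j : Fin p) → Fin (n j)) (Fin (r p)) ℝ)
    (hGlt : ∀ i c, Glt i c = ttChain r n G p i a c)
    (Slt : Matrix (Fin m) ((j : Fin p) → Fin (n j)) ℝ)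
    (hSlt : Slt = tensorSketch (n := fun j : Fin p => n j) (fun j => h j) (fun j => v j))
    (s : Fin m) (c : Fin (r p)) :
    (dft m * Slt.map ofRealHom * Glt.map ofRealHom) s c =
      ttChain r (fun _ => m) (modeCore r n G h v) p (fun _ => s) a c := by
  let FS (j : ℕ) := dft m * (countSketch (h j) (v j)).map ofRealHom
  let Gℂ (j : ℕ) (i : Fin (n j)) := (G j i).map ofRealHom
  have sketch_entry (i) : (dft m * Slt.map ofRealHom) s i = ∏ j : Fin p, FS j s (i j) := by
    rw [hSlt, dft_mul_tensorSketch_apply]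
  have interface_entry (i) : Glt.map ofRealHom i c = ttChain r n Gℂ p i a c := by
    rw [← ttChain_map, Matrix.map_apply, hGlt, Matrix.map_apply]
  calc (dft m * Slt.map ofRealHom * Glt.map ofRealHom) s c
      = ∑ i : (j : Fin p) → Fin (n j), (∏ j : Fin p, FS j s (i j)) * ttChain r n Gℂ p i a c := by
        simp only [Matrix.mul_apply (N := Glt.map _), sketch_entry, interface_entry]
    _ = ttChain r (fun _ => m) (fun j => modeProduct (Gℂ j) (FS j)) p (fun _ => s) a c := by
        simp only [ttChain_modeProduct, Matrix.sum_apply, Matrix.smul_apply, smul_eq_mul]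
    _ = ttChain r (fun _ => m) (modeCore r n G h v) p (fun _ => s) a c := by
        simp only [funext (modeCore_eq_modeProduct r n G h v), FS, Gℂ]

/-- Theorem 3.5, first identity: for TT-cores `𝒢₁ ∈ ℝ^{1×n₁×r₁}, …,
𝒢_{k-1} ∈ ℝ^{r_{k-2}×n_{k-1}×r_{k-1}}` (here `p = k-1` cores with ranks `r 0 = 1`), the
matrix `G_{<k}` whose row at `(i₁,…,i_{k-1})` is `𝒢₁(i₁)⋯𝒢_{k-1}(i_{k-1})`, and the
TensorSketch matrix `S_{<k}` generated by CountSketch matrices `S₁,…,S_{k-1}`, one has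
`F S_{<k} G_{<k} = [(𝒢₁ ×₂ F S₁) ⋆ ⋯ ⋆ (𝒢_{k-1} ×₂ F S_{k-1})]^L`; the left unfolding is
expressed entrywise via the identification `Fin (r 0) × Fin m ≃ Fin m` given by `r 0 = 1`:
the `((a,s), c)` entry of the left unfolding is the `(a,c)` entry of the `s`-th slice of the
slice-wise product. -/
theorem dft_tensorSketch_interfaceLeft_eq_sliceChain
    {m p : ℕ} [NeZero m] (r n : ℕ → ℕ) (hr0 : r 0 = 1)
    (G : (j : ℕ) → Fin (n j) → Matrix (Fin (r j)) (Fin (r (j + 1))) ℝ)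
    (h : (j : ℕ) → Fin (n j) → Fin m) (v : (j : ℕ) → Fin (n j) → ℝ)
    (hv : ∀ j i, v j i = 1 ∨ v j i = -1)
    (Glt : Matrix ((j : Fin p) → Fin (n j)) (Fin (r p)) ℝ)
    (hGlt : ∀ i (a : Fin (r 0)) c, Glt i c = ttChain r n G p i a c)
    (Slt : Matrix (Fin m) ((j : Fin p) → Fin (n j)) ℝ)
    (hSlt : Slt = countSketch (hashFam (n := fun j : Fin p => n j) (fun j => h j))
      (fun i => ∏ j : Fin p, v (↑j) (i j))) :
    ∀ (s : Fin m) (a : Fin (r 0)) (c : Fin (r p)),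
      (dft m * Slt.map Complex.ofReal * Glt.map Complex.ofReal) s c =
        ttChain r (fun _ => m) (modeCore r n G h v) p (fun _ => s) a c := by
  intro s a c
  exact dft_tensorSketch_interfaceLeft_eq_sliceChain_general r n G h v a Glt (fun i => hGlt i a)
    Slt hSlt s c
end
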